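/- arXiv:1409.7883 — 2 statements merged into one kernel-verified Lean document; each statement's English description precedes it below -/
import Mathlib

section
/- Let Φ : ℂ^n → ℂ^n be a polynomial automorphism of finite order m > 1 (Φ^m = identity, Φ ≠ identity). Assume that the set of fixed points of Φ contains the zero set Z(h) of some nonconstant polynomial h ∈ ℂ[x_1,…,x_n] (so that Fix(Φ) has dimension n−1). Then Φ is not special, i.e., Jac(Φ) ≠ 1. -/
/-! A prime factor `p` of `h` divides every `F i - X i` by the Nullstellensatz. Let `σ` be the
substitution endomorphism `X i ↦ F i`, and let `k ≥ 1` be the largest exponent with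
`p ^ k ∣ F i - X i` for all `i`; write `F i = X i + p ^ k * G i`.

If the Jacobian is `1`, then `p ^ 2 ∣ σ p - p`: for `k ≥ 2` this is clear, while for `k = 1`
reducing the Jacobian matrix modulo `p` gives `I + G (∇p)ᵀ`, whose determinant is `1 + ∇p · G`,
so that `p ∣ ∇p · G`, and `σ p ≡ p + p (∇p · G)` modulo `p ^ 2` by Taylor expansion. Hence `σ`
fixes `p ^ k` modulo `p ^ (k + 1)`, and induction gives
`σ^j (X i) ≡ X i + j p ^ k G i` modulo `p ^ (k + 1)`. At `j = m` this forces `p ∣ G i` for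
every `i`, which contradicts the choice of `k`. -/

open MvPolynomial

/-- The polynomial map `K^n → K^n` induced by the component polynomials `F i`. -/
noncomputable def evalMap {K : Type*} [CommSemiring K] {n : ℕ}
    (F : Fin n → MvPolynomial (Fin n) K) : (Fin n → K) → (Fin n → K) :=
  fun x i => eval x (F i)

/-- `F` defines a polynomial automorphism of `K^n`: the induced map is bijective with a
polynomial inverse. -/
def IsPolyAut {K : Type*} [CommSemiring K] {n : ℕ}
    (F : Fin n → MvPolynomial (Fin n) K) : Prop :=
  ∃ G : Fin n → MvPolynomial (Fin n) K,
    (∀ x, evalMap F (evalMap G x) = x) ∧ (∀ x, evalMap G (evalMap F x) = x)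

/-- The Jacobian of the polynomial map `F`: the determinant of the matrix of partial
derivatives `∂F_i/∂x_j` (for a polynomial automorphism it is a nonzero constant). -/
noncomputable def jacPoly {K : Type*} [CommRing K] {n : ℕ}
    (F : Fin n → MvPolynomial (Fin n) K) : MvPolynomial (Fin n) K :=
  (Matrix.of fun i j => pderiv j (F i)).det


/-- The endomorphism of the polynomial ring given by substituting `F i` for `X i`, that is, by
composition with `evalMap F`. -/
noncomputable def substHom {n : ℕ} (F : Fin n → MvPolynomial (Fin n) ℂ) :
    MvPolynomial (Fin n) ℂ →ₐ[ℂ] MvPolynomial (Fin n) ℂ := aeval F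

theorem eval_substHom_iterate {n : ℕ} (F : Fin n → MvPolynomial (Fin n) ℂ) (j : ℕ) :
    ∀ (f : MvPolynomial (Fin n) ℂ) (x : Fin n → ℂ),
      eval x ((substHom F)^[j] f) = eval ((evalMap F)^[j] x) f := by
  have h1 : ∀ (f : MvPolynomial (Fin n) ℂ) (x : Fin n → ℂ),
      eval x (substHom F f) = eval (evalMap F x) f := by
    intro f x
    induction f using MvPolynomial.induction_on with
    | C a => simp [substHom]
    | add f g hf hg => simp [hf, hg]
    | mul_X f i hf => rw [map_mul, map_mul, hf, map_mul]; simp [substHom, evalMap]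
  induction j with
  | zero => simp
  | succ j ih =>
    intro f x
    rw [Function.iterate_succ_apply, ih, h1, Function.iterate_succ_apply']

/-- By the Nullstellensatz, every prime factor of `h` divides all `F i - X i`, since these vanish
on `Z(h)`. -/
theorem exists_prime_dvd_sub {n : ℕ} (F : Fin n → MvPolynomial (Fin n) ℂ)
    (h : MvPolynomial (Fin n) ℂ) (hdeg : h.totalDegree ≠ 0)
    (hsub : ∀ x : Fin n → ℂ, eval x h = 0 → evalMap F x = x) :
    ∃ p : MvPolynomial (Fin n) ℂ, Prime p ∧ ∀ i, p ∣ F i - X i := by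
  have h0 : h ≠ 0 := by rintro rfl; simp at hdeg
  have hu : ¬ IsUnit h := by
    intro hu
    obtain ⟨r, -, rfl⟩ := MvPolynomial.isUnit_iff_eq_C_of_isReduced.1 hu
    simp at hdeg
  obtain ⟨p, hp, q, rfl⟩ := WfDvdMonoid.exists_irreducible_factor hu h0
  refine ⟨p, hp.prime, fun i => ?_⟩
  have hP : (Ideal.span {p}).IsPrime := (Ideal.span_singleton_prime hp.ne_zero).2 hp.prime
  rw [← Ideal.mem_span_singleton, ← hP.radical,
    ← MvPolynomial.vanishingIdeal_zeroLocus_eq_radical (K := ℂ), MvPolynomial.mem_vanishingIdeal_iff]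
  intro x hx
  rw [MvPolynomial.mem_zeroLocus_iff] at hx
  have hpx : eval x p = 0 := by
    simpa [MvPolynomial.aeval_eq_eval] using hx p (Ideal.mem_span_singleton_self p)
  have := congrFun (hsub x (by simp [hpx])) i
  simp only [evalMap] at this
  simp [MvPolynomial.aeval_eq_eval, this]

/-- First-order Taylor expansion of the substitution `X i ↦ X i + c * G i`. -/
theorem taylor_substHom {n : ℕ} (F G : Fin n → MvPolynomial (Fin n) ℂ)
    (c : MvPolynomial (Fin n) ℂ) (hG : ∀ i, F i = X i + c * G i) (f : MvPolynomial (Fin n) ℂ) :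
    c ^ 2 ∣ substHom F f - (f + c * ∑ i, pderiv i f * G i) := by
  induction f using MvPolynomial.induction_on with
  | C a => simp [substHom]
  | add f g hf hg =>
    convert dvd_add hf hg using 1
    simp only [map_add, add_mul, Finset.sum_add_distrib]
    ring
  | mul_X f j hf =>
    have hs : ∑ i, pderiv i (f * X j) * G i = (∑ i, pderiv i f * G i) * X j + f * G j := by
      simp only [Derivation.leibniz, smul_eq_mul, pderiv_X, add_mul, Finset.sum_add_distrib,
        Finset.sum_mul]
      rw [add_comm]
      refine congrArg₂ (· + ·) ?_ ?_
      · exact Finset.sum_congr rfl fun i _ => by rw [mul_comm (X j)]; exact mul_right_comm _ _ _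
      · rw [Finset.sum_eq_single j]
        · simp
        · intro i _ hi; simp [hi.symm]
        · simp
    have hX : substHom F (X j) = X j + c * G j := by simp [substHom, hG]
    obtain ⟨t, ht⟩ := hf
    rw [hs, map_mul, hX]
    generalize (∑ i, pderiv i f * G i) = S at ht ⊢
    refine Dvd.intro (t * (X j + c * G j) + S * G j) ?_
    linear_combination (-(X j + c * G j)) * ht

/-- The Jacobian matrix of `X i + p * G i` is `I + G (∇p)ᵀ` modulo `p`. -/
theorem dvd_jacPoly_sub {n : ℕ} (F G : Fin n → MvPolynomial (Fin n) ℂ)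
    (p : MvPolynomial (Fin n) ℂ) (hG : ∀ i, F i = X i + p * G i) :
    p ∣ jacPoly F - (1 + ∑ i, pderiv i p * G i) := by
  rw [← Ideal.mem_span_singleton, ← Ideal.Quotient.eq]
  set φ := Ideal.Quotient.mk (Ideal.span {p}) with hφ
  have hp : φ p = 0 := Ideal.Quotient.eq_zero_iff_mem.2 (Ideal.mem_span_singleton_self p)
  have hM : φ.mapMatrix (Matrix.of fun i j => pderiv j (F i)) =
      1 + Matrix.replicateCol Unit (fun i => φ (G i)) *
        Matrix.replicateRow Unit (fun j => φ (pderiv j p)) := by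
    ext i j
    simp only [hG, RingHom.mapMatrix_apply, Matrix.map_apply, Matrix.of_apply, map_add,
      Derivation.leibniz, smul_eq_mul, map_mul, hp, Matrix.add_apply, Matrix.mul_apply,
      Matrix.replicateCol_apply, Matrix.replicateRow_apply, pderiv_X, Pi.single_apply,
      Matrix.one_apply]
    by_cases hij : i = j <;> simp [hij]
  rw [jacPoly, RingHom.map_det, hM, Matrix.det_one_add_replicateCol_mul_replicateRow]
  simp [dotProduct]

/-- Substitutions congruent modulo `c` agree modulo `c`. -/
theorem dvd_substHom_sub {n : ℕ} (F G : Fin n → MvPolynomial (Fin n) ℂ)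
    (c : MvPolynomial (Fin n) ℂ) (hG : ∀ i, F i = X i + c * G i) (f : MvPolynomial (Fin n) ℂ) :
    c ∣ substHom F f - f := by
  obtain ⟨t, ht⟩ := taylor_substHom F G c hG f
  exact ⟨c * t + ∑ i, pderiv i f * G i, by linear_combination ht⟩

/-- A polynomial automorphism `Φ` of `ℂ^n` of finite order `m > 1`
whose fixed-point set contains the zero set of a nonconstant polynomial `h` is not
special: `Jac(Φ) ≠ 1`. -/
theorem nonspecial_of_finite_order_with_fixed_hypersurface {n : ℕ}
    (F : Fin n → MvPolynomial (Fin n) ℂ) (hF : IsPolyAut F)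
    (m : ℕ) (hm : 1 < m) (horder : (evalMap F)^[m] = id) (hneq : evalMap F ≠ id)
    (h : MvPolynomial (Fin n) ℂ) (hdeg : h.totalDegree ≠ 0)
    (hsub : ∀ x : Fin n → ℂ, eval x h = 0 → evalMap F x = x) :
    jacPoly F ≠ 1 := by
  intro hJ
  obtain ⟨p, hp, hpF⟩ := exists_prime_dvd_sub F h hdeg hsub
  have hex : ∃ k, ∃ i, ¬ p ^ (k + 1) ∣ F i - X i := by
    have hi : ∃ i, F i - X i ≠ 0 := by
      by_contra! hcon
      refine hneq (funext fun x => funext fun i => ?_)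
      simp [evalMap, sub_eq_zero.1 (hcon i)]
    obtain ⟨i, hi⟩ := hi
    obtain ⟨k, hk⟩ := FiniteMultiplicity.of_not_isUnit hp.not_isUnit hi
    exact ⟨k, i, hk⟩
  classical
  obtain ⟨i₀, hi₀⟩ := Nat.find_spec hex
  have hmin := fun j => @Nat.find_min _ _ hex j
  generalize Nat.find hex = k at hi₀ hmin
  have hk0 : k ≠ 0 := by
    rintro rfl
    exact hi₀ (by simpa using hpF i₀)
  obtain ⟨l, rfl⟩ := Nat.exists_eq_succ_of_ne_zero hk0
  change ¬ p ^ (l + 2) ∣ _ at hi₀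
  have hdiv : ∀ i, p ^ (l + 1) ∣ F i - X i := by
    have := hmin l (Nat.lt_succ_self l)
    push Not at this
    exact this
  choose G hG using hdiv
  replace hG : ∀ i, F i = X i + p ^ (l + 1) * G i := fun i => by rw [← hG i]; ring
  have hmod := dvd_substHom_sub F G _ hG
  -- The Jacobian hypothesis is needed only when `k = l + 1` equals `1`.
  have hσp : p ^ 2 ∣ substHom F p - p := by
    rcases Nat.eq_zero_or_pos l with rfl | hl
    · have hG' : ∀ i, F i = X i + p * G i := by simpa using hG
      obtain ⟨a, ha⟩ := dvd_jacPoly_sub F G p hG'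
      obtain ⟨t, ht⟩ := taylor_substHom F G p hG' p
      exact ⟨t - a, by rw [hJ] at ha; linear_combination ht - p * ha⟩
    · exact (pow_dvd_pow p (by omega)).trans (hmod p)
  have hσpk : p ^ (l + 2) ∣ substHom F (p ^ (l + 1)) - p ^ (l + 1) := by
    obtain ⟨a, ha⟩ := hσp
    have h1 : substHom F p = p * (1 + p * a) := by linear_combination ha
    have h2 : p ∣ (1 + p * a) ^ (l + 1) - 1 := by
      have := sub_dvd_pow_sub_pow (1 + p * a) 1 (l + 1)
      rw [one_pow] at this
      exact (Dvd.intro a (by ring)).trans this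
    obtain ⟨b, hb⟩ := h2
    exact ⟨b, by rw [map_pow, h1, mul_pow]; linear_combination p ^ (l + 1) * hb⟩
  have hiter : ∀ j : ℕ, p ^ (l + 2) ∣
      (substHom F)^[j] (X i₀) - (X i₀ + (j : MvPolynomial (Fin n) ℂ) * (p ^ (l + 1) * G i₀)) := by
    intro j
    induction j with
    | zero => simp
    | succ j ih =>
      obtain ⟨t, ht⟩ := ih
      obtain ⟨a, ha⟩ := hσpk
      obtain ⟨b, hb⟩ := hmod (G i₀)
      obtain ⟨d, hd⟩ := hmod p
      have hX : substHom F (X i₀) = X i₀ + p ^ (l + 1) * G i₀ := by simp [substHom, hG]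
      have hp1 : substHom F p = p * (1 + p ^ l * d) := by
        linear_combination hd
      rw [Function.iterate_succ_apply', sub_eq_iff_eq_add.1 ht]
      simp only [map_add, map_mul, map_natCast, hX, sub_eq_iff_eq_add.1 ha,
        sub_eq_iff_eq_add.1 hb, map_pow, hp1, mul_pow]
      push_cast
      exact ⟨(1 + p ^ l * d) ^ (l + 2) * substHom F t + j * (a * (G i₀ + p ^ (l + 1) * b)
        + p ^ l * b), by ring⟩
  have hid : (substHom F)^[m] (X i₀) = X i₀ := by
    refine MvPolynomial.funext fun x => ?_
    rw [eval_substHom_iterate, horder, id]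
  obtain ⟨t, ht⟩ := hiter m
  rw [hid] at ht
  have hm0 : (m : ℂ) ≠ 0 := by exact_mod_cast (by omega : m ≠ 0)
  have hC : (C (m : ℂ)⁻¹ : MvPolynomial (Fin n) ℂ) * (m : MvPolynomial (Fin n) ℂ) = 1 := by
    rw [← map_natCast (C : ℂ →+* MvPolynomial (Fin n) ℂ) m, ← C_mul, inv_mul_cancel₀ hm0, C_1]
  refine hi₀ ⟨-C (m : ℂ)⁻¹ * t, ?_⟩
  rw [hG]
  linear_combination (-C (m : ℂ)⁻¹) * ht - p ^ (l + 1) * G i₀ * hC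
end

section
/- Let K be an algebraically closed field of characteristic zero and let f : K^n → K^n be a special polynomial automorphism (Jac(f) = 1). Let h ∈ K[x_1,…,x_n] be an irreducible polynomial whose zero set Z(h) is contained in Fix(f). Then h ∘ f = h as polynomials; in particular f preserves every fiber {x ∈ K^n : h(x) = t}, t ∈ K. -/
/-!
Each `F i - X i` vanishes on `Z(h)`, hence `F i = X i + h * g i` by the Nullstellensatz.
Likewise `h ∘ f` vanishes on `Z(h)`, so `h` divides `h ∘ f`; as `p ↦ p ∘ f` is a ring automorphism,
`h ∘ f` is irreducible, so `h ∘ f = c h` for a nonzero constant `c`.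

To see that `c = 1`, put `d = ∑ i, g i * ∂h/∂x_i` and compute `d` modulo `h` in two ways.
Modulo `h` the Jacobian matrix of `f` is the rank-one perturbation `1 + g (∇h)ᵀ` of the identity, so
`1 = Jac(f) ≡ 1 + d` (`jacPoly_add_mul`). On the other hand, the first-order Taylor expansion
`h ∘ f ≡ h + h d` modulo `h ^ 2` (`sq_dvd_taylor`) gives `c ≡ 1 + d` modulo `h`. Hence the nonunit
`h` divides the constant `c - 1`, which is therefore zero.
-/

open MvPolynomial

/-- First-order Taylor expansion of `p` at `X + h g`, modulo `h ^ 2`. -/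
theorem sq_dvd_taylor {R : Type*} [CommRing R] {n : ℕ} (h : MvPolynomial (Fin n) R)
    (g : Fin n → MvPolynomial (Fin n) R) (p : MvPolynomial (Fin n) R) :
    h ^ 2 ∣ bind₁ (fun i => X i + h * g i) p - (p + h * ∑ i, g i * pderiv i p) := by
  induction p using MvPolynomial.induction_on with
  | C a => simp
  | add p q hp hq =>
    convert dvd_add hp hq using 1
    simp only [map_add, mul_add, Finset.sum_add_distrib]
    ring
  | mul_X p j hp =>
    have hs : ∑ i, g i * pderiv i (p * X j) = (∑ i, g i * pderiv i p) * X j + p * g j := by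
      simp only [Derivation.leibniz, smul_eq_mul, mul_add, Finset.sum_add_distrib, pderiv_X,
        Pi.single_apply, mul_ite, mul_one, mul_zero, Finset.sum_ite_eq,
        Finset.mem_univ, if_true, Finset.sum_mul]
      rw [add_comm]
      congr 1
      · exact Finset.sum_congr rfl fun i _ => by ring
      · simp [mul_comm]
    obtain ⟨r, hr⟩ := hp
    rw [sub_eq_iff_eq_add] at hr
    rw [hs, map_mul, hr, bind₁_X_right]
    refine ⟨r * (X j + h * g j) + g j * ∑ i, g i * pderiv i p, ?_⟩
    ring

/-- Modulo `h`, the Jacobian matrix of `X + h g` is `1 + g (∇h)ᵀ`, so the matrix determinant lemma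
applies. -/
theorem jacPoly_add_mul {R : Type*} [CommRing R] {n : ℕ} (h : MvPolynomial (Fin n) R)
    (g : Fin n → MvPolynomial (Fin n) R) :
    h ∣ jacPoly (fun i => X i + h * g i) - (1 + ∑ i, g i * pderiv i h) := by
  rw [← Ideal.mem_span_singleton, ← Ideal.Quotient.eq, jacPoly, RingHom.map_det]
  set q := Ideal.Quotient.mk (Ideal.span {h})
  have hq : q h = 0 := Ideal.Quotient.eq_zero_iff_mem.2 (Ideal.mem_span_singleton_self h)
  have hM : q.mapMatrix (Matrix.of fun i j => pderiv j (X i + h * g i))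
      = 1 + Matrix.replicateCol Unit (fun i => q (g i))
        * Matrix.replicateRow Unit (fun j => q (pderiv j h)) := by
    ext i j
    simp [Matrix.mul_apply, hq, pderiv_X, Pi.single_apply, Matrix.one_apply, apply_ite q]
  rw [hM, Matrix.det_one_add_replicateCol_mul_replicateRow]
  simp [dotProduct, mul_comm]

theorem eval_bind₁_eq {R : Type*} [CommRing R] {n : ℕ} (F : Fin n → MvPolynomial (Fin n) R)
    (p : MvPolynomial (Fin n) R) (x : Fin n → R) :
    eval x (bind₁ F p) = eval (evalMap F x) p := by
  have := aeval_bind₁ x F p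
  simp only [aeval_eq_eval] at this
  exact this

/-- If two polynomial maps are inverse to each other pointwise, so are the corresponding
substitutions. -/
theorem bind₁_comp_of_evalMap {K : Type*} [CommRing K] [IsDomain K] [Infinite K] {n : ℕ}
    {F G : Fin n → MvPolynomial (Fin n) K} (hFG : ∀ x, evalMap F (evalMap G x) = x)
    (p : MvPolynomial (Fin n) K) : bind₁ G (bind₁ F p) = p :=
  MvPolynomial.funext fun x => by rw [eval_bind₁_eq, eval_bind₁_eq, hFG]

theorem irreducible_bind₁ {K : Type*} [CommRing K] [IsDomain K] [Infinite K] {n : ℕ}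
    {F G : Fin n → MvPolynomial (Fin n) K} (hFG : ∀ x, evalMap F (evalMap G x) = x)
    (hGF : ∀ x, evalMap G (evalMap F x) = x) {p : MvPolynomial (Fin n) K} (hp : Irreducible p) :
    Irreducible (bind₁ F p) := by
  let e : MvPolynomial (Fin n) K ≃ₐ[K] MvPolynomial (Fin n) K :=
    AlgEquiv.ofAlgHom (bind₁ F) (bind₁ G)
      (AlgHom.ext fun q => bind₁_comp_of_evalMap hGF q)
      (AlgHom.ext fun q => bind₁_comp_of_evalMap hFG q)
  have he : e p = bind₁ F p := rfl
  rw [← he]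
  exact (MulEquiv.irreducible_iff e).2 hp

/-- The Nullstellensatz for an irreducible hypersurface. -/
theorem dvd_of_eval_eq_zero {K : Type*} [Field K] [IsAlgClosed K] {n : ℕ}
    {h p : MvPolynomial (Fin n) K} (hirr : Irreducible h)
    (hp : ∀ x : Fin n → K, eval x h = 0 → eval x p = 0) : h ∣ p := by
  have : (Ideal.span {h}).IsPrime := (Ideal.span_singleton_prime hirr.ne_zero).2 hirr.prime
  rw [← Ideal.mem_span_singleton,
    ← IsPrime.vanishingIdeal_zeroLocus (K := K) (Ideal.span {h}), mem_vanishingIdeal_iff]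
  intro x hx
  have := hx h (Ideal.mem_span_singleton_self h)
  rw [aeval_eq_eval] at this ⊢
  exact hp x this

/-- Let `K` be algebraically closed of characteristic zero and `f` a
special polynomial automorphism of `K^n` (`Jac(f) = 1`). If `h` is an irreducible
polynomial with `Z(h) ⊆ Fix(f)`, then `h ∘ f = h` as polynomials; in particular `f`
preserves every fiber `{h = t}`. -/
theorem invariant_of_special_fixed_hypersurface {K : Type*} [Field K] [IsAlgClosed K]
    [CharZero K] {n : ℕ} (F : Fin n → MvPolynomial (Fin n) K) (hF : IsPolyAut F)
    (hjac : jacPoly F = 1)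
    (h : MvPolynomial (Fin n) K) (hirr : Irreducible h)
    (hsub : ∀ x : Fin n → K, eval x h = 0 → evalMap F x = x) :
    (bind₁ F) h = h ∧
      ∀ t : K, evalMap F '' {x : Fin n → K | eval x h = t}
        = {x : Fin n → K | eval x h = t} := by
  obtain ⟨G, hFG, hGF⟩ := hF
  have key : bind₁ F h = h := by
    have hdvd : ∀ i, h ∣ F i - X i := fun i => dvd_of_eval_eq_zero hirr fun x hx => by
      have := congrFun (hsub x hx) i
      simp only [evalMap] at this
      simp [this]
    choose g hg using hdvd
    obtain rfl : F = fun i => X i + h * g i := by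
      funext i
      rw [← hg i]
      ring
    obtain ⟨u, hu⟩ : h ∣ bind₁ (fun i => X i + h * g i) h :=
      dvd_of_eval_eq_zero hirr fun x hx => by rw [eval_bind₁_eq, hsub x hx, hx]
    have hirr' : Irreducible (bind₁ (fun i => X i + h * g i) h) :=
      irreducible_bind₁ hFG hGF hirr
    have hunit : IsUnit u := (hirr'.isUnit_or_isUnit hu).resolve_left hirr.not_isUnit
    obtain ⟨c, -, rfl⟩ := isUnit_iff_eq_C_of_isReduced.1 hunit
    have h1 := jacPoly_add_mul h g
    rw [hjac] at h1
    have h2 : h ∣ C c - (1 + ∑ i, g i * pderiv i h) := by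
      refine (mul_dvd_mul_iff_left hirr.ne_zero).1 ?_
      convert sq_dvd_taylor h g h using 1
      · ring
      · rw [hu]
        ring
    have h3 : h ∣ C (c - 1) := by
      convert dvd_sub h2 h1 using 1
      rw [map_sub, map_one]
      ring
    -- A nonzero constant is a unit, so it has no irreducible divisor.
    have hc : c - 1 = 0 := by
      by_contra hne
      exact hirr.not_isUnit (isUnit_of_dvd_unit h3 ((IsUnit.mk0 _ hne).map C))
    rw [hu, sub_eq_zero.1 hc]
    simp
  have hinv : ∀ x, eval (evalMap F x) h = eval x h := fun x => by rw [← eval_bind₁_eq, key]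
  refine ⟨key, fun t => Set.Subset.antisymm ?_ ?_⟩
  · rintro _ ⟨x, hx, rfl⟩
    exact (hinv x).trans hx
  · intro y hy
    exact ⟨evalMap G y, by rw [Set.mem_ofPred_eq, ← hinv, hFG]; exact hy, hFG y⟩
end
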